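/- For every integer k ≥ 2: ρ_opt(C_{3k−1}□P_2) ≤ ρ_opt(P_{3k−2}□P_2) ≤ 2k, ρ_opt(C_{3k}□P_2) ≤ ρ_opt(P_{3k−1}□P_2) ≤ 2k, and ρ_opt(C_{3k+1}□P_2) ≤ ρ_opt(P_{3k}□P_2) ≤ 2k+1. -/

import Mathlib

open SimpleGraph

/-- A single rubbling move on `G`: either a pebbling move (remove two pebbles at `v`,
add one at an adjacent vertex `u`) or a strict rubbling move (remove one pebble each at
distinct `v` and `w`, both adjacent to `u`, and add one pebble at `u`). -/
def RubblingStep {V : Type*} [DecidableEq V] (G : SimpleGraph V) (p q : V → ℕ) : Prop :=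
  (∃ v u, G.Adj v u ∧ 2 ≤ p v ∧
      q = fun x => if x = v then p x - 2 else if x = u then p x + 1 else p x) ∨
  (∃ v w u, v ≠ w ∧ G.Adj v u ∧ G.Adj w u ∧ 1 ≤ p v ∧ 1 ≤ p w ∧
      q = fun x => if x = v then p x - 1 else if x = w then p x - 1
          else if x = u then p x + 1 else p x)

/-- `q` is obtainable from `p` by an executable rubbling sequence. -/
def RubblingReach {V : Type*} [DecidableEq V] (G : SimpleGraph V) : (V → ℕ) → (V → ℕ) → Prop :=
  Relation.ReflTransGen (RubblingStep G)

/-- The vertex `u` is `k`-reachable from the distribution `p`. -/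
def KReachable {V : Type*} [DecidableEq V] (G : SimpleGraph V) (p : V → ℕ) (u : V) (k : ℕ) : Prop :=
  ∃ q, RubblingReach G p q ∧ k ≤ q u

/-- `p` is solvable: every vertex is reachable. -/
def Solvable {V : Type*} [DecidableEq V] (G : SimpleGraph V) (p : V → ℕ) : Prop :=
  ∀ u, KReachable G p u 1

/-- The optimal rubbling number: the minimum size of a solvable distribution. -/
noncomputable def optRub {V : Type*} [DecidableEq V] [Fintype V] (G : SimpleGraph V) : ℕ :=
  sInf {m | ∃ p : V → ℕ, Solvable G p ∧ ∑ v, p v = m}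

/-- The ladder `P_n □ P_2`. -/
def ladder (n : ℕ) : SimpleGraph (Fin n × Fin 2) :=
  pathGraph n □ pathGraph 2

/-- The `n`-prism `C_n □ P_2`. -/
def prism (n : ℕ) : SimpleGraph (Fin n × Fin 2) :=
  cycleGraph n □ pathGraph 2

lemma step_iff {V : Type*} [DecidableEq V] {G : SimpleGraph V} {p q : V → ℕ} :
    RubblingStep G p q ↔ ∃ v w u, G.Adj v u ∧ G.Adj w u ∧
      ∀ x, q x + ((if x = v then 1 else 0) + (if x = w then 1 else 0)) =
        p x + (if x = u then 1 else 0) := by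
  constructor
  · rintro (⟨v, u, h, h2, rfl⟩ | ⟨v, w, u, hvw, hv, hw, h1, h2, rfl⟩)
    · refine ⟨v, v, u, h, h, fun x => ?_⟩
      have := h.ne
      by_cases hx : x = v
      · subst hx; simp [this]; omega
      · simp [hx]; split_ifs <;> omega
    · refine ⟨v, w, u, hv, hw, fun x => ?_⟩
      have := hv.ne
      have := hw.ne
      by_cases hx : x = v
      · subst hx; simp [*]
      · by_cases hx' : x = w
        · subst hx'; simp [*]
        · simp [hx, hx']; split_ifs <;> omega
  · rintro ⟨v, w, u, hv, hw, h⟩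
    have nv := hv.ne
    have nw := hw.ne
    by_cases hvw : v = w
    · subst hvw
      left
      refine ⟨v, u, hv, ?_, ?_⟩
      · have := h v; simp [nv] at this; omega
      · funext x
        have := h x
        by_cases hx : x = v
        · subst hx; simp [nv] at this ⊢; omega
        · simp [hx] at this ⊢; split_ifs at * <;> omega
    · right
      refine ⟨v, w, u, hvw, hv, hw, ?_, ?_, ?_⟩
      · have := h v; simp [nv, hvw] at this; omega
      · have := h w; simp [nw, Ne.symm hvw] at this; omega
      · funext x
        have := h x
        by_cases hx : x = v
        · subst hx; simp [nv, hvw] at this ⊢; omega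
        · by_cases hx' : x = w
          · subst hx'; simp [nw, hx] at this ⊢; omega
          · simp [hx, hx'] at this ⊢; split_ifs at * <;> omega

lemma reach_add {V : Type*} [DecidableEq V] {G : SimpleGraph V} {p q : V → ℕ} (r : V → ℕ)
    (h : RubblingReach G p q) : RubblingReach G (p + r) (q + r) := by
  induction h with
  | refl => exact Relation.ReflTransGen.refl
  | tail _ h ih =>
    refine Relation.ReflTransGen.tail ih ?_
    rw [step_iff] at h ⊢
    obtain ⟨v, w, u, hv, hw, h⟩ := h
    refine ⟨v, w, u, hv, hw, fun x => ?_⟩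
    have := h x
    simp only [Pi.add_apply]
    omega

lemma reach_mono {V : Type*} [DecidableEq V] {G : SimpleGraph V} {p q p' : V → ℕ}
    (h : RubblingReach G p q) (hp : ∀ x, p x ≤ p' x) :
    ∃ q', RubblingReach G p' q' ∧ ∀ x, q x ≤ q' x := by
  have := reach_add (p' - p) h
  rw [show p + (p' - p) = p' from funext fun x => by
    have := hp x; simp only [Pi.add_apply, Pi.sub_apply]; omega] at this
  exact ⟨_, this, fun x => by simp⟩

lemma kreach_mono {V : Type*} [DecidableEq V] {G : SimpleGraph V} {p p' : V → ℕ} {u : V}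
    (h : KReachable G p u 1) (hp : ∀ x, p x ≤ p' x) : KReachable G p' u 1 := by
  obtain ⟨q, h, hq⟩ := h
  obtain ⟨r, hr, hqr⟩ := reach_mono h hp
  exact ⟨r, hr, hq.trans (hqr u)⟩

/-- Combining two reaches from disjoint resources by a final rubbling move. -/
lemma kreach_combine {V : Type*} [DecidableEq V] {G : SimpleGraph V} {p₁ p₂ p : V → ℕ}
    {u v w : V} (h₁ : KReachable G p₁ v 1) (h₂ : KReachable G p₂ w 1)
    (hv : G.Adj v u) (hw : G.Adj w u) (hp : ∀ x, p₁ x + p₂ x ≤ p x) :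
    KReachable G p u 1 := by
  obtain ⟨q₁, h₁, hq₁⟩ := h₁
  obtain ⟨q₂, h₂, hq₂⟩ := h₂
  refine kreach_mono (p := p₁ + p₂) ?_ hp
  have a := reach_add p₂ h₁
  have b := reach_add q₁ h₂
  rw [add_comm p₂, add_comm q₂] at b
  refine ⟨fun x => (q₁ x + q₂ x + (if x = u then 1 else 0)) -
    ((if x = v then 1 else 0) + (if x = w then 1 else 0)), (a.trans b).tail ?_, ?_⟩
  · rw [step_iff]
    refine ⟨v, w, u, hv, hw, fun x => ?_⟩
    have nv := hv.ne
    have nw := hw.ne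
    simp only [Pi.add_apply]
    split_ifs <;> subst_vars <;> omega
  · have nv := hv.ne.symm
    have nw := hw.ne.symm
    simp [nv, nw]

/-- One step lowers a weight by the cost of the target. -/
lemma step_weight {V : Type*} [DecidableEq V] [Fintype V] {p q : V → ℕ}
    (W : V → ℕ) {v w u : V} (c : ℕ) (hc : W u + c ≤ W v + W w)
    (h : ∀ x, q x + ((if x = v then 1 else 0) + (if x = w then 1 else 0)) =
        p x + (if x = u then 1 else 0)) :
    ∑ x, W x * q x + c ≤ ∑ x, W x * p x := by
  have : ∑ x, W x * (q x + ((if x = v then 1 else 0) + (if x = w then 1 else 0))) =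
      ∑ x, W x * (p x + (if x = u then 1 else 0)) :=
    Finset.sum_congr rfl fun x _ => by rw [h x]
  simp only [mul_add, Finset.sum_add_distrib, mul_ite, mul_one, mul_zero, Finset.sum_ite_eq',
    Finset.mem_univ, if_true] at this
  omega

/-- Weights lower bound with zero costs. -/
lemma reach_weight {V : Type*} [DecidableEq V] [Fintype V] {G : SimpleGraph V} {p q : V → ℕ}
    (W : V → ℕ) (hW : ∀ v w u, G.Adj v u → G.Adj w u → W u ≤ W v + W w)
    (h : RubblingReach G p q) : ∑ x, W x * q x ≤ ∑ x, W x * p x := by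
  induction h with
  | refl => exact le_rfl
  | tail _ h ih =>
    rw [step_iff] at h
    obtain ⟨v, w, u, hv, hw, h⟩ := h
    have := step_weight W 0 (by simpa using hW v w u hv hw) h
    omega

/-- The restriction of a distribution to the columns at most `j`. -/
def cut {V : Type*} (col : V → ℕ) (p : V → ℕ) (j : ℕ) : V → ℕ :=
  fun x => if col x ≤ j then p x else 0

def colW (b j : ℕ) : ℕ := if j < b then 2 else 1

def colCost (b j : ℕ) : ℕ := if j + 1 < b then 2 else if j + 1 = b then 0 else 1

lemma sum_colCost (a b : ℕ) :
    ∑ j ∈ Finset.range a, colCost b j = if a < b then 2 * a else if b = 0 then a else a + b - 2 := by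
  induction a with
  | zero => simp; omega
  | succ a ih =>
    rw [Finset.sum_range_succ, ih, colCost]
    split_ifs <;> omega

lemma reach_track {V : Type*} [DecidableEq V] [Fintype V] {G : SimpleGraph V} (col : V → ℕ)
    (hcol : ∀ v u, G.Adj v u → col v ≤ col u + 1) (b : ℕ) {p q : V → ℕ}
    (h : RubblingReach G p q) :
    ∃ T : Finset ℕ, (∀ j ∉ T, ∃ q', RubblingReach G (cut col p j) q' ∧
        ∀ x, col x ≤ j → q x ≤ q' x) ∧
      ∑ x, colW b (col x) * q x + ∑ j ∈ T, colCost b j ≤ ∑ x, colW b (col x) * p x := by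
  induction h with
  | refl =>
    refine ⟨∅, fun j _ => ⟨_, Relation.ReflTransGen.refl, fun x hx => ?_⟩, by simp⟩
    simp [cut, hx]
  | @tail q r _ h ih =>
    obtain ⟨T, hT, hs⟩ := ih
    rw [step_iff] at h
    obtain ⟨v, w, u, hv, hw, h⟩ := h
    refine ⟨insert (col u) T, fun j hj => ?_, ?_⟩
    · simp only [Finset.mem_insert, not_or] at hj
      obtain ⟨q', hq', hle⟩ := hT j hj.2
      have cv := hcol v u hv
      have cw := hcol w u hw
      by_cases hu : col u ≤ j
      · have lv := hle v (by omega)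
        have lw := hle w (by omega)
        have sv := h v
        have sw := h w
        refine ⟨fun x => (q' x + (if x = u then 1 else 0)) -
          ((if x = v then 1 else 0) + (if x = w then 1 else 0)), hq'.tail ?_, fun x hx => ?_⟩
        · rw [step_iff]
          refine ⟨v, w, u, hv, hw, fun x => ?_⟩
          have nv := hv.ne
          have nw := hw.ne
          split_ifs at * <;> subst_vars <;> first | omega | contradiction
        · have := hle x hx
          have := h x
          dsimp only
          omega
      · refine ⟨q', hq', fun x hx => ?_⟩
        have hxu : x ≠ u := by rintro rfl; exact hu hx
        have h1 := hle x hx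
        have h2 := h x
        rw [if_neg hxu] at h2
        omega
    · have hst := step_weight (fun x => colW b (col x)) (colCost b (col u)) (by
        have hcv := hcol u v hv.symm
        have hcw := hcol u w hw.symm
        have := hcol v u hv
        have := hcol w u hw
        simp only [colW, colCost]
        split_ifs <;> omega) h
      have : ∑ j ∈ insert (col u) T, colCost b j ≤ colCost b (col u) + ∑ j ∈ T, colCost b j := by
        by_cases hm : col u ∈ T
        · rw [Finset.insert_eq_of_mem hm]; omega
        · rw [Finset.sum_insert hm]
      omega

/-- If `a` is the least number of columns needed to reach `t` in column `0`, then many pebbles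
are present. -/
lemma left_bound {V : Type*} [DecidableEq V] [Fintype V] {G : SimpleGraph V} (col : V → ℕ)
    (hcol : ∀ v u, G.Adj v u → col v ≤ col u + 1) {p : V → ℕ} {t : V} (ht : col t = 0)
    {a b : ℕ} (hba : b ≤ a) (ha : KReachable G (cut col p a) t 1)
    (hmin : ∀ j < a, ¬ KReachable G (cut col p j) t 1) :
    a + b ≤ ∑ x, (if col x < b then 2 else if col x ≤ a then 1 else 0) * p x := by
  obtain ⟨q, hq, h1⟩ := ha
  obtain ⟨T, hT, hs⟩ := reach_track col hcol b hq
  have hsub : Finset.range a ⊆ T := by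
    intro j hj
    by_contra hjT
    have hj := Finset.mem_range.1 hj
    obtain ⟨q', hq', hle⟩ := hT j hjT
    have : cut col (cut col p a) j = cut col p j := by
      funext x
      simp only [cut]
      split_ifs <;> omega
    rw [this] at hq'
    exact hmin j hj ⟨q', hq', h1.trans (hle t (by omega))⟩
  have h2 := Finset.sum_le_sum_of_subset (f := colCost b) hsub
  rw [sum_colCost] at h2
  have h3 : colW b (col t) * q t ≤ ∑ x, colW b (col x) * q x :=
    Finset.single_le_sum (f := fun x => colW b (col x) * q x) (fun _ _ => Nat.zero_le _)
      (Finset.mem_univ t)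
  have h4 : colW b (col t) ≤ colW b (col t) * q t := Nat.le_mul_of_pos_right _ h1
  have h5 : ∑ x, colW b (col x) * cut col p a x =
      ∑ x, (if col x < b then 2 else if col x ≤ a then 1 else 0) * p x := by
    refine Finset.sum_congr rfl fun x _ => ?_
    simp only [cut, colW]
    split_ifs <;> omega
  have h6 : colW b (col t) = if 0 < b then 2 else 1 := by rw [ht]; rfl
  rw [h6] at h3 h4
  rw [← h5]
  split_ifs at * <;> omega

/-- Pushing a reach forward along an injective graph homomorphism. -/
lemma kreach_map {V V' : Type*} [DecidableEq V] [DecidableEq V'] {G : SimpleGraph V}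
    {G' : SimpleGraph V'} (f : V → V') (hf : Function.Injective f)
    (hG : ∀ v u, G.Adj v u → G'.Adj (f v) (f u)) {p : V → ℕ} {t : V}
    (h : KReachable G p t 1) : KReachable G' (Function.extend f p 0) (f t) 1 := by
  obtain ⟨q, hq, h1⟩ := h
  refine ⟨Function.extend f q 0, ?_, by rwa [hf.extend_apply]⟩
  clear h1
  induction hq with
  | refl => exact Relation.ReflTransGen.refl
  | tail _ h ih =>
    refine Relation.ReflTransGen.tail ih ?_
    rw [step_iff] at h ⊢
    obtain ⟨v, w, u, hv, hw, h⟩ := h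
    refine ⟨f v, f w, f u, hG _ _ hv, hG _ _ hw, fun x => ?_⟩
    by_cases hx : ∃ y, f y = x
    · obtain ⟨y, rfl⟩ := hx
      simp only [hf.extend_apply, hf.eq_iff]
      exact h y
    · rw [Function.extend_apply' _ _ _ hx, Function.extend_apply' _ _ _ hx]
      have hne : ∀ y, x ≠ f y := fun y e => hx ⟨y, e.symm⟩
      simp [hne]

lemma sum_extend {V V' : Type*} [Fintype V] [Fintype V'] (f : V → V')
    (hf : Function.Injective f) (p : V → ℕ) : ∑ x, Function.extend f p 0 x = ∑ x, p x := by
  symm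
  apply Fintype.sum_of_injective f hf
  · intro x hx
    exact Function.extend_apply' _ _ _ (by simpa using hx)
  · intro x
    rw [hf.extend_apply]

lemma optRub_le {V : Type*} [DecidableEq V] [Fintype V] {G : SimpleGraph V} {p : V → ℕ}
    (h : Solvable G p) : optRub G ≤ ∑ v, p v := Nat.sInf_le ⟨p, h, rfl⟩

lemma optRub_spec {V : Type*} [DecidableEq V] [Fintype V] (G : SimpleGraph V) :
    ∃ p : V → ℕ, Solvable G p ∧ ∑ v, p v = optRub G := by
  have : {m | ∃ p : V → ℕ, Solvable G p ∧ ∑ v, p v = m}.Nonempty :=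
    ⟨_, fun _ => 1, fun u => ⟨_, Relation.ReflTransGen.refl, le_rfl⟩, rfl⟩
  exact Nat.sInf_mem this

lemma ladder_adj {n : ℕ} {x y : Fin n × Fin 2} : (ladder n).Adj x y ↔
    ((x.1.val + 1 = y.1.val ∨ y.1.val + 1 = x.1.val) ∧ x.2 = y.2) ∨
      (x.2 ≠ y.2 ∧ x.1 = y.1) := by
  rw [ladder, boxProd_adj, pathGraph_adj, pathGraph_two_eq_top, top_adj]

lemma prism_adj_of_ladder {n : ℕ} {x y : Fin n × Fin 2} (h : (ladder n).Adj x y) :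
    (prism n).Adj x y := by
  rw [ladder, boxProd_adj] at h
  rw [prism, boxProd_adj]
  exact h.imp (fun h => ⟨pathGraph_le_cycleGraph h.1, h.2⟩) id

/-- The inclusion of the ladder into a prism with one more column. -/
def emb (n : ℕ) (x : Fin n × Fin 2) : Fin (n + 1) × Fin 2 := (x.1.castSucc, x.2)

lemma emb_inj (n : ℕ) : Function.Injective (emb n) := by
  rintro ⟨a, b⟩ ⟨c, d⟩ h
  simpa [emb] using h

lemma emb_adj {n : ℕ} (v u : Fin n × Fin 2) (h : (ladder n).Adj v u) :
    (prism (n + 1)).Adj (emb n v) (emb n u) := by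
  apply prism_adj_of_ladder
  rw [ladder_adj] at h ⊢
  simpa [emb] using h

/-- The vertices `(0, i)` and `(n - 1, i)` are reachable using disjoint sets of pebbles. -/
def Sim {n : ℕ} (hn : 0 < n) (p : Fin n × Fin 2 → ℕ) : Prop :=
  ∀ i : Fin 2, ∃ p₁ p₂ : Fin n × Fin 2 → ℕ, KReachable (ladder n) p₁ (⟨0, hn⟩, i) 1 ∧
    KReachable (ladder n) p₂ (⟨n - 1, by omega⟩, i) 1 ∧ ∀ x, p₁ x + p₂ x ≤ p x

lemma prism_le_of_sim {n : ℕ} (hn : 0 < n) {p : Fin n × Fin 2 → ℕ} (hs : Solvable (ladder n) p)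
    (hsim : Sim hn p) : optRub (prism (n + 1)) ≤ ∑ x, p x := by
  rw [← sum_extend (emb n) (emb_inj n) p]
  apply optRub_le
  rintro ⟨j, i⟩
  induction j using Fin.lastCases with
  | cast j => exact kreach_map (emb n) (emb_inj n) emb_adj (hs (j, i))
  | last =>
    obtain ⟨p₁, p₂, h₁, h₂, hle⟩ := hsim i
    refine kreach_combine (kreach_map (emb n) (emb_inj n) emb_adj h₁)
      (kreach_map (emb n) (emb_inj n) emb_adj h₂) ?_ ?_ ?_
    · rw [prism, boxProd_adj, cycleGraph_adj']
      left
      refine ⟨Or.inl ?_, rfl⟩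
      simp only [emb, Fin.sub_def, Fin.val_last, Fin.val_castSucc]
      rw [show n + 1 - n + 0 = 1 by omega]
      exact Nat.mod_eq_of_lt (by omega)
    · apply prism_adj_of_ladder
      rw [ladder_adj]
      left
      simp only [emb, Fin.val_last, Fin.val_castSucc]
      exact ⟨Or.inl (by omega), trivial⟩
    · intro x
      by_cases hx : ∃ y, emb n y = x
      · obtain ⟨y, rfl⟩ := hx
        simp only [(emb_inj n).extend_apply]
        exact hle y
      · simp only [Function.extend_apply' _ _ _ hx]
        simp

lemma sim_or_large {n : ℕ} (hn : 0 < n) {p : Fin n × Fin 2 → ℕ} (hs : Solvable (ladder n) p) :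
    Sim hn p ∨ n - 1 ≤ ∑ x, p x := by
  classical
  by_contra hcon
  rw [not_or] at hcon
  obtain ⟨h1, h2⟩ := hcon
  apply h1
  intro i
  by_contra h3
  apply h2
  set cl : Fin n × Fin 2 → ℕ := fun x => x.1.val with hcl
  set cr : Fin n × Fin 2 → ℕ := fun x => n - 1 - x.1.val with hcr
  have hl : ∀ v u, (ladder n).Adj v u → cl v ≤ cl u + 1 := by
    intro v u h
    rw [ladder_adj] at h
    simp only [hcl]
    rcases h with ⟨h, _⟩ | ⟨_, h⟩
    · omega
    · rw [h]; omega
  have hr : ∀ v u, (ladder n).Adj v u → cr v ≤ cr u + 1 := by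
    intro v u h
    rw [ladder_adj] at h
    simp only [hcr]
    rcases h with ⟨h, _⟩ | ⟨_, h⟩
    · omega
    · rw [h]; omega
  have exl : KReachable (ladder n) (cut cl p (n - 1)) (⟨0, hn⟩, i) 1 :=
    kreach_mono (hs _) fun x => by
      have := x.1.isLt
      simp only [cut, hcl]; rw [if_pos (by omega)]
  have exr : KReachable (ladder n) (cut cr p (n - 1)) (⟨n - 1, by omega⟩, i) 1 :=
    kreach_mono (hs _) fun x => by
      simp only [cut, hcr]; rw [if_pos (by omega)]
  have exl' : ∃ a, KReachable (ladder n) (cut cl p a) (⟨0, hn⟩, i) 1 := ⟨_, exl⟩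
  have exr' : ∃ a, KReachable (ladder n) (cut cr p a) (⟨n - 1, by omega⟩, i) 1 := ⟨_, exr⟩
  obtain ⟨a, ha, haml, han⟩ : ∃ a, KReachable (ladder n) (cut cl p a) (⟨0, hn⟩, i) 1 ∧
      (∀ j < a, ¬ KReachable (ladder n) (cut cl p j) (⟨0, hn⟩, i) 1) ∧ a ≤ n - 1 :=
    ⟨Nat.find exl', Nat.find_spec exl', fun j hj => Nat.find_min exl' hj, Nat.find_min' exl' exl⟩
  obtain ⟨c, hc, hcml, hcn⟩ : ∃ a, KReachable (ladder n) (cut cr p a) (⟨n - 1, by omega⟩, i) 1 ∧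
      (∀ j < a, ¬ KReachable (ladder n) (cut cr p j) (⟨n - 1, by omega⟩, i) 1) ∧ a ≤ n - 1 :=
    ⟨Nat.find exr', Nat.find_spec exr', fun j hj => Nat.find_min exr' hj, Nat.find_min' exr' exr⟩
  have hov : n - 1 ≤ a + c := by
    by_contra hlt
    refine h3 ⟨_, _, ha, hc, fun x => ?_⟩
    have := x.1.isLt
    simp only [cut, hcl, hcr]
    split_ifs <;> omega
  have L := left_bound cl hl (p := p) (t := (⟨0, hn⟩, i)) rfl (a := a) (b := n - 1 - c)
    (by omega) ha haml
  have R := left_bound cr hr (p := p) (t := (⟨n - 1, by omega⟩, i)) (by simp [hcr]) (a := c)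
    (b := n - 1 - a) (by omega) hc hcml
  have S : ∑ x, (if cl x < n - 1 - c then 2 else if cl x ≤ a then 1 else 0) * p x +
      ∑ x, (if cr x < n - 1 - a then 2 else if cr x ≤ c then 1 else 0) * p x ≤
      2 * ∑ x, p x := by
    rw [← Finset.sum_add_distrib, Finset.mul_sum]
    refine Finset.sum_le_sum fun x _ => ?_
    rw [← add_mul]
    refine Nat.mul_le_mul_right _ ?_
    have := x.1.isLt
    simp only [hcl, hcr]
    split_ifs <;> omega
  omega

/-- Weights for the ladder with four columns. -/
def W4 (t x : Fin 4 × Fin 2) : ℕ :=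
  2 ^ (4 - ((t.1.val - x.1.val) + (x.1.val - t.1.val) + (if t.2 = x.2 then 0 else 1)))

lemma W4_adj (t v u : Fin 4 × Fin 2) (h : (ladder 4).Adj v u) : W4 t u ≤ 2 * W4 t v := by
  rw [ladder_adj] at h
  revert t v u
  decide

lemma four_le {p : Fin 4 × Fin 2 → ℕ} (hs : Solvable (ladder 4) p) : 4 ≤ ∑ x, p x := by
  have key : ∀ t, 16 ≤ ∑ x, W4 t x * p x := by
    intro t
    obtain ⟨q, hq, h1⟩ := hs t
    have a := reach_weight (W4 t) (fun v w u hv hw => by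
      have := W4_adj t v u hv
      have := W4_adj t w u hw
      omega) hq
    have b : W4 t t * q t ≤ ∑ x, W4 t x * q x :=
      Finset.single_le_sum (f := fun x => W4 t x * q x) (fun _ _ => Nat.zero_le _)
        (Finset.mem_univ t)
    have c : W4 t t = 16 := by simp [W4]
    rw [c] at b
    omega
  have k0 := key (0, 0)
  have k1 := key (0, 1)
  have k2 := key (1, 0)
  have k3 := key (1, 1)
  have k4 := key (2, 0)
  have k5 := key (2, 1)
  have k6 := key (3, 0)
  have k7 := key (3, 1)
  simp [Fintype.sum_prod_type, Fin.sum_univ_four, W4] at *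
  omega

/-- The explicit distribution on the ladder. -/
def pd (n : ℕ) (x : Fin n × Fin 2) : ℕ :=
  if (x.1.val % 3 = 0 ∧ x.2.val = 0) ∨ (x.1.val % 3 = 1 ∧ x.2.val = 1) ∨
    (x.1.val + 1 = n ∧ (n % 3 = 1 ∨ (n % 3 = 0 ∧ x.2.val = 0))) then 1 else 0

lemma sum_base (n : ℕ) : ∑ j ∈ Finset.range n, (if j % 3 = 2 then 0 else 1) = n - n / 3 := by
  induction n with
  | zero => simp
  | succ n ih =>
    rw [Finset.sum_range_succ, ih]
    split_ifs <;> omega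

lemma sum_pd (n : ℕ) (hn : 0 < n) :
    ∑ x, pd n x = n - n / 3 + (if n % 3 = 2 then 0 else 1) := by
  have h : ∀ j : Fin n, ∑ i : Fin 2, pd n (j, i) =
      (fun j : ℕ => (if j % 3 = 2 then 0 else 1) +
        (if j = n - 1 then (if n % 3 = 2 then 0 else 1) else 0)) j.val := by
    intro j
    have := j.isLt
    simp only [Fin.sum_univ_two, pd, Fin.val_zero, Fin.val_one, and_true,
      zero_ne_one, one_ne_zero, and_false, false_or, or_false]
    split_ifs <;> omega
  rw [Fintype.sum_prod_type, Finset.sum_congr rfl (fun j _ => h j), Fin.sum_univ_eq_sum_range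
    (fun j : ℕ => (if j % 3 = 2 then 0 else 1) +
        (if j = n - 1 then (if n % 3 = 2 then 0 else 1) else 0)) n, Finset.sum_add_distrib,
    sum_base, Finset.sum_ite_eq', if_pos (Finset.mem_range.2 (by omega))]

/-- A single pebble. -/
def one {V : Type*} [DecidableEq V] (a : V) : V → ℕ := fun x => if x = a then 1 else 0

lemma kreach_one {V : Type*} [DecidableEq V] (G : SimpleGraph V) (a : V) :
    KReachable G (one a) a 1 := ⟨_, Relation.ReflTransGen.refl, by simp [one]⟩

lemma kreach_two {V : Type*} [DecidableEq V] {G : SimpleGraph V} {a b u : V} (ha : G.Adj a u)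
    (hb : G.Adj b u) : KReachable G (one a + one b) u 1 :=
  kreach_combine (kreach_one G a) (kreach_one G b) ha hb fun _ => le_rfl

lemma oneP_le {V : Type*} [DecidableEq V] {p : V → ℕ} {a : V} (h : 1 ≤ p a) :
    ∀ x, one a x ≤ p x := by
  intro x
  simp only [one]
  split_ifs <;> subst_vars <;> omega

lemma two_le {V : Type*} [DecidableEq V] {p : V → ℕ} {a b : V} (ha : 1 ≤ p a) (hb : 1 ≤ p b)
    (hab : a ≠ b) : ∀ x, one a x + one b x ≤ p x := by
  intro x
  simp only [one]
  split_ifs <;> subst_vars <;> first | omega | contradiction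

lemma three_le {V : Type*} [DecidableEq V] {p : V → ℕ} {a b c : V} (ha : 1 ≤ p a) (hb : 1 ≤ p b)
    (hc : 1 ≤ p c) (hab : a ≠ b) (hac : a ≠ c) (hbc : b ≠ c) :
    ∀ x, one a x + (one b + one c) x ≤ p x := by
  intro x
  simp only [one, Pi.add_apply]
  split_ifs <;> subst_vars <;> first | omega | contradiction

lemma pd_pos {n : ℕ} (x : Fin n × Fin 2) (h : (x.1.val % 3 = 0 ∧ x.2.val = 0) ∨
    (x.1.val % 3 = 1 ∧ x.2.val = 1) ∨
    (x.1.val + 1 = n ∧ (n % 3 = 1 ∨ (n % 3 = 0 ∧ x.2.val = 0)))) : 1 ≤ pd n x := by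
  rw [pd, if_pos h]

lemma pd_solvable {n : ℕ} (hn : 4 ≤ n) : Solvable (ladder n) (pd n) := by
  rintro ⟨⟨j, hj⟩, i⟩
  have hcases : j % 3 = 0 ∨ j % 3 = 1 ∨ j % 3 = 2 := by omega
  by_cases hp : 1 ≤ pd n (⟨j, hj⟩, i)
  · exact kreach_mono (kreach_one _ _) (oneP_le hp)
  rcases hcases with h | h | h
  · have hi : i = 1 := by
      by_contra hi
      exact hp (pd_pos (⟨j, hj⟩, i) (by simp; omega))
    subst hi
    have hlast : j + 1 < n := by
      by_contra hl
      exact hp (pd_pos (⟨j, hj⟩, 1) (by simp; omega))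
    refine kreach_mono (kreach_two (a := (⟨j, hj⟩, 0)) (b := (⟨j + 1, hlast⟩, 1)) ?_ ?_)
      (two_le (pd_pos _ ?_) (pd_pos _ ?_) ?_)
    all_goals (try rw [ladder_adj]); simp; try omega
  · have hi : i = 0 := by
      by_contra hi
      exact hp (pd_pos (⟨j, hj⟩, i) (by simp; omega))
    subst hi
    refine kreach_mono (kreach_two (a := (⟨j, hj⟩, 1)) (b := (⟨j - 1, by omega⟩, 0)) ?_ ?_)
      (two_le (pd_pos _ ?_) (pd_pos _ ?_) ?_)
    all_goals (try rw [ladder_adj]); simp; try omega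
  · have hi : i = 0 ∨ i = 1 := by omega
    by_cases hlast : j + 1 < n
    · rcases hi with rfl | rfl
      · refine kreach_combine (kreach_one _ (⟨j + 1, hlast⟩, 0))
          (kreach_two (u := (⟨j - 1, by omega⟩, 0)) (a := (⟨j - 1, by omega⟩, 1))
            (b := (⟨j - 2, by omega⟩, 0)) ?_ ?_) ?_ ?_
          (three_le (pd_pos _ ?_) (pd_pos _ ?_) (pd_pos _ ?_) ?_ ?_ ?_)
        all_goals (try rw [ladder_adj]); simp; try omega
      · by_cases hl2 : j + 2 < n
        · refine kreach_combine (kreach_one _ (⟨j - 1, by omega⟩, 1))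
            (kreach_two (u := (⟨j + 1, by omega⟩, 1)) (a := (⟨j + 1, by omega⟩, 0))
              (b := (⟨j + 2, by omega⟩, 1)) ?_ ?_) ?_ ?_
            (three_le (pd_pos _ ?_) (pd_pos _ ?_) (pd_pos _ ?_) ?_ ?_ ?_)
          all_goals (try rw [ladder_adj]); simp; try omega
        · refine kreach_mono (kreach_two (a := (⟨j - 1, by omega⟩, 1))
            (b := (⟨j + 1, by omega⟩, 1)) ?_ ?_) (two_le (pd_pos _ ?_) (pd_pos _ ?_) ?_)
          all_goals (try rw [ladder_adj]); simp; try omega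
    · rcases hi with rfl | rfl
      · exact absurd (pd_pos (⟨j, hj⟩, 0) (by simp; omega)) hp
      · refine kreach_mono (kreach_two (a := (⟨j - 1, by omega⟩, 1))
          (b := (⟨j, by omega⟩, 0)) ?_ ?_) (two_le (pd_pos _ ?_) (pd_pos _ ?_) ?_)
        all_goals (try rw [ladder_adj]); simp; try omega

lemma pd_sim {n : ℕ} (hn : 4 ≤ n) : Sim (by omega) (pd n) := by
  intro i
  have hi : i = 0 ∨ i = 1 := by omega
  have combine : ∀ p₁ p₂ : Fin n × Fin 2 → ℕ, (∀ x, p₁ x ≤ pd n x) → (∀ x, p₂ x ≤ pd n x) →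
      (∀ x, x.1.val ≤ 1 → p₂ x = 0) → (∀ x, 2 ≤ x.1.val → p₁ x = 0) →
      ∀ x, p₁ x + p₂ x ≤ pd n x := by
    intro p₁ p₂ h1 h2 h3 h4 x
    have := h1 x
    have := h2 x
    by_cases hx : x.1.val ≤ 1
    · rw [h3 x hx]; omega
    · rw [h4 x (by omega)]; omega
  have zl : ∀ (a : Fin n × Fin 2), a.1.val ≤ 1 → ∀ x, 2 ≤ x.1.val → one a x = 0 := by
    intro a ha x hx
    simp only [one]
    rw [if_neg]
    rintro rfl
    omega
  have zr : ∀ (a : Fin n × Fin 2), 2 ≤ a.1.val → ∀ x, x.1.val ≤ 1 → one a x = 0 := by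
    intro a ha x hx
    simp only [one]
    rw [if_neg]
    rintro rfl
    omega
  obtain ⟨p₁, h1, h1l, h1z⟩ : ∃ p₁ : Fin n × Fin 2 → ℕ,
      KReachable (ladder n) p₁ (⟨0, by omega⟩, i) 1 ∧ (∀ x, p₁ x ≤ pd n x) ∧
      (∀ x, 2 ≤ x.1.val → p₁ x = 0) := by
    rcases hi with rfl | rfl
    · exact ⟨_, kreach_one _ _, oneP_le (pd_pos _ (by simp)), zl _ (by simp)⟩
    · refine ⟨_, kreach_two (a := (⟨0, by omega⟩, 0)) (b := (⟨1, by omega⟩, 1)) ?_ ?_,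
        two_le (pd_pos _ ?_) (pd_pos _ ?_) ?_, fun x hx => ?_⟩
      rotate_right
      · rw [Pi.add_apply, zl _ (by simp) x hx, zl _ (by simp) x hx]
      all_goals (try rw [ladder_adj]); simp
  obtain ⟨p₂, h2, h2l, h2z⟩ : ∃ p₂ : Fin n × Fin 2 → ℕ,
      KReachable (ladder n) p₂ (⟨n - 1, by omega⟩, i) 1 ∧ (∀ x, p₂ x ≤ pd n x) ∧
      (∀ x, x.1.val ≤ 1 → p₂ x = 0) := by
    by_cases hp : 1 ≤ pd n (⟨n - 1, by omega⟩, i)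
    · exact ⟨_, kreach_one _ _, oneP_le hp, zr _ (by simp; omega)⟩
    · rcases hi with rfl | rfl
      · have hm : n % 3 = 2 := by
          by_contra hm
          exact hp (pd_pos _ (by simp; omega))
        refine ⟨_, kreach_two (a := (⟨n - 1, by omega⟩, 1)) (b := (⟨n - 2, by omega⟩, 0)) ?_ ?_,
          two_le (pd_pos _ ?_) (pd_pos _ ?_) ?_, fun x hx => ?_⟩
        rotate_right
        · rw [Pi.add_apply, zr _ (by simp; omega) x hx, zr _ (by simp; omega) x hx]
        all_goals (try rw [ladder_adj]); simp; try omega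
      · have hm : n % 3 = 0 := by
          by_contra hm
          exact hp (pd_pos _ (by simp; omega))
        refine ⟨_, kreach_two (a := (⟨n - 1, by omega⟩, 0)) (b := (⟨n - 2, by omega⟩, 1)) ?_ ?_,
          two_le (pd_pos _ ?_) (pd_pos _ ?_) ?_, fun x hx => ?_⟩
        rotate_right
        · rw [Pi.add_apply, zr _ (by simp; omega) x hx, zr _ (by simp; omega) x hx]
        all_goals (try rw [ladder_adj]); simp; try omega
  exact ⟨p₁, p₂, h1, h2, combine p₁ p₂ h1l h2l h2z h1z⟩

lemma ladder_le {n : ℕ} (hn : 4 ≤ n) :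
    optRub (ladder n) ≤ n - n / 3 + (if n % 3 = 2 then 0 else 1) := by
  rw [← sum_pd n (by omega)]
  exact optRub_le (pd_solvable hn)

lemma prism_le_ladder {n : ℕ} (hn : 4 ≤ n) : optRub (prism (n + 1)) ≤ optRub (ladder n) := by
  obtain ⟨p, hp, hs⟩ := optRub_spec (ladder n)
  rw [← hs]
  rcases sim_or_large (by omega) hp with h | h
  · exact prism_le_of_sim _ hp h
  · refine (prism_le_of_sim _ (pd_solvable hn) (pd_sim hn)).trans ?_
    rw [sum_pd n (by omega)]
    have h4 : 4 ≤ ∑ x, p x ∨ n ≠ 4 := by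
      by_cases e : n = 4
      · subst e; exact Or.inl (four_le hp)
      · exact Or.inr e
    split_ifs <;> omega


/-- Upper bounds for the optimal rubbling numbers of prisms via ladders. -/
theorem prism_upper_bounds (k : ℕ) (hk : 2 ≤ k) :
    (optRub (prism (3 * k - 1)) ≤ optRub (ladder (3 * k - 2)) ∧
      optRub (ladder (3 * k - 2)) ≤ 2 * k) ∧
    (optRub (prism (3 * k)) ≤ optRub (ladder (3 * k - 1)) ∧
      optRub (ladder (3 * k - 1)) ≤ 2 * k) ∧
    (optRub (prism (3 * k + 1)) ≤ optRub (ladder (3 * k)) ∧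
      optRub (ladder (3 * k)) ≤ 2 * k + 1) := by
  have e1 : 3 * k - 1 = (3 * k - 2) + 1 := by omega
  have e2 : 3 * k = (3 * k - 1) + 1 := by omega
  have a1 := prism_le_ladder (n := 3 * k - 2) (by omega)
  have a2 := prism_le_ladder (n := 3 * k - 1) (by omega)
  have a3 := prism_le_ladder (n := 3 * k) (by omega)
  have b1 := ladder_le (n := 3 * k - 2) (by omega)
  have b2 := ladder_le (n := 3 * k - 1) (by omega)
  have b3 := ladder_le (n := 3 * k) (by omega)
  rw [← e1] at a1
  rw [← e2] at a2
  refine ⟨⟨a1, b1.trans ?_⟩, ⟨a2, b2.trans ?_⟩, ⟨a3, b3.trans ?_⟩⟩ <;> split_ifs <;> omega
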